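/- arXiv:2502.04872 — 2 statements merged into one kernel-verified Lean document; each statement's English description precedes it below -/
import Mathlib

section
/- Let I be a monomial ideal in R, W a subset of the variables, and n ≥ 1. Then (I^n)_W = (I_W)^n, where K_W = K : f^∞ with f the product of the variables in W. -/
open MvPolynomial

/-- `I` is a monomial ideal: it is generated by a set of monomials. -/
def IsMonomialIdeal {K : Type*} [Field K] {σ : Type*} (I : Ideal (MvPolynomial σ K)) : Prop :=
  ∃ S : Set (σ →₀ ℕ), I = Ideal.span ((fun s => (monomial s (1 : K))) '' S)

/-- The saturation `I : f^∞ = { r : f^m * r ∈ I for some m }` of an ideal `I`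
with respect to an element `f`. -/
def Ideal.satur {R : Type*} [CommRing R] (I : Ideal R) (f : R) : Ideal R :=
  ⨆ m : ℕ, I.colon (Ideal.span {f ^ m})

/-! After multiplication by a high power of `x^w`, the exponents of the variables dividing `x^w` no
longer matter for membership in a monomial ideal, so saturating the ideal by `x^w` erases these
variables from every generator. Erasing variables is an additive map on exponents, hence commutes
with the `n`-fold sums of exponents that generate the `n`-th power of the ideal. -/

open scoped Pointwise

theorem mem_satur_iff {R : Type*} [CommRing R] {I : Ideal R} {f r : R} :
    r ∈ I.satur f ↔ ∃ m : ℕ, f ^ m * r ∈ I := by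
  have colon_pow_mono : Monotone fun m : ℕ ↦ I.colon (Ideal.span {f ^ m}) := fun _ _ hab ↦
    Submodule.colon_mono le_rfl (Ideal.span_singleton_le_span_singleton.2 (pow_dvd_pow f hab))
  simp only [Ideal.satur, Submodule.mem_iSup_of_directed _ colon_pow_mono.directed_le,
    Ideal.mem_colon_span_singleton, mul_comm r]

theorem filter_le_iff_exists_le_nsmul_add {σ : Type*} {s w e : σ →₀ ℕ} :
    s.filter (w · = 0) ≤ e ↔ ∃ m : ℕ, s ≤ m • w + e := by
  constructor
  · intro h
    refine ⟨s.degree, fun x ↦ ?_⟩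
    rw [Finsupp.add_apply, Finsupp.smul_apply, smul_eq_mul]
    by_cases hx : w x = 0
    · have : s x ≤ e x := by simpa [hx] using h x
      omega
    · calc s x ≤ s.degree := Finsupp.le_degree x s
        _ ≤ s.degree * w x := Nat.le_mul_of_pos_right _ (Nat.pos_of_ne_zero hx)
        _ ≤ s.degree * w x + e x := Nat.le_add_right _ _
  · rintro ⟨m, hm⟩ x
    by_cases hx : w x = 0
    · simpa [hx] using hm x
    · simp [hx]

/-- The ideal of `R[x]` generated by the monomials `x^s` for `s ∈ S`. Indexing monomial ideals by
sets of exponents turns products of ideals into pointwise sums of sets. -/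
noncomputable def monomialIdeal (R : Type*) [CommSemiring R] {σ : Type*} (S : Set (σ →₀ ℕ)) :
    Ideal (MvPolynomial σ R) :=
  Ideal.span ((fun s ↦ monomial s (1 : R)) '' S)

section CommSemiring

variable {R : Type*} [CommSemiring R] {σ : Type*} (S T : Set (σ →₀ ℕ))

theorem monomialIdeal_zero : monomialIdeal R (0 : Set (σ →₀ ℕ)) = 1 := by
  simp [monomialIdeal, Ideal.one_eq_top]

theorem monomialIdeal_add :
    monomialIdeal R (S + T) = monomialIdeal R S * monomialIdeal R T := by
  have image_add : (fun s ↦ monomial s (1 : R)) '' (S + T) =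
      (fun s ↦ monomial s (1 : R)) '' S * (fun s ↦ monomial s (1 : R)) '' T :=
    Set.image_image2_distrib fun s t ↦ by rw [monomial_mul, one_mul]
  rw [monomialIdeal, image_add, ← Ideal.span_mul_span', monomialIdeal, monomialIdeal]

theorem monomialIdeal_nsmul (n : ℕ) : monomialIdeal R (n • S) = monomialIdeal R S ^ n := by
  induction n with
  | zero => rw [zero_nsmul, pow_zero, monomialIdeal_zero]
  | succ n ih => rw [succ_nsmul, pow_succ, monomialIdeal_add, ih]

variable {S}

theorem monomial_mul_mem_monomialIdeal_iff {u : σ →₀ ℕ} {p : MvPolynomial σ R} :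
    monomial u 1 * p ∈ monomialIdeal R S ↔ ∀ e ∈ p.support, ∃ s ∈ S, s ≤ u + e := by
  have support_mul : (monomial u 1 * p).support = p.support.map (addLeftEmbedding u) :=
    AddMonoidAlgebra.support_coeff_single_mul p 1 (by simp) u
  simp only [monomialIdeal, mem_ideal_span_monomial_image, support_mul, Finset.forall_mem_map,
    addLeftEmbedding_apply]

end CommSemiring

section CommRing

variable {R : Type*} [CommRing R] {σ : Type*} (S : Set (σ →₀ ℕ))

theorem satur_monomialIdeal (w : σ →₀ ℕ) :
    (monomialIdeal R S).satur (monomial w 1) =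
      monomialIdeal R (Finsupp.filterAddHom (w · = 0) '' S) := by
  apply le_antisymm
  · intro p hp
    obtain ⟨m, hm⟩ := mem_satur_iff.1 hp
    rw [monomial_pow, one_pow, monomial_mul_mem_monomialIdeal_iff] at hm
    refine mem_ideal_span_monomial_image.2 fun e he ↦ ?_
    obtain ⟨s, hs, hle⟩ := hm e he
    exact ⟨_, Set.mem_image_of_mem _ hs, filter_le_iff_exists_le_nsmul_add.2 ⟨m, hle⟩⟩
  · refine Ideal.span_le.2 ?_
    rintro _ ⟨_, ⟨s, hs, rfl⟩, rfl⟩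
    obtain ⟨m, hm⟩ := filter_le_iff_exists_le_nsmul_add.1 (le_refl (s.filter (w · = 0)))
    refine mem_satur_iff.2 ⟨m, ?_⟩
    rw [monomial_pow, one_pow, monomial_mul_mem_monomialIdeal_iff]
    intro e he
    obtain rfl := Finset.mem_singleton.1 (support_monomial_subset he)
    exact ⟨s, hs, hm⟩

theorem satur_pow_general (w : σ →₀ ℕ) (n : ℕ) :
    (monomialIdeal R S ^ n).satur (monomial w 1) =
      (monomialIdeal R S).satur (monomial w 1) ^ n := by
  rw [← monomialIdeal_nsmul, satur_monomialIdeal, satur_monomialIdeal, Set.image_nsmul,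
    monomialIdeal_nsmul]

end CommRing

/-- The localization of a power of a monomial ideal with respect to a set of variables `W`
equals the power of the localization: `(I^n)_W = (I_W)^n`, where `K_W = K : f^∞` with
`f = ∏_{x ∈ W} x`. -/
theorem satur_pow {K : Type*} [Field K] {σ : Type*}
    (I : Ideal (MvPolynomial σ K)) (hI : IsMonomialIdeal I) (W : Finset σ)
    (n : ℕ) (hn : 1 ≤ n) :
    (I ^ n).satur (∏ x ∈ W, X x) = (I.satur (∏ x ∈ W, (X x : MvPolynomial σ K))) ^ n := by
  obtain ⟨S, rfl⟩ := hI
  simpa only [monomialIdeal, monomial_sum_one, X] using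
    satur_pow_general S (∑ x ∈ W, Finsupp.single x 1) n
end

section
/- Let R = K[a,b,x,y] and I = (a^p x^p, a^k b^k, b^q y^q) with positive integers p, q, k. If min{p,q} ≥ 2k, then R/I^n is Cohen-Macaulay for all n ≥ 1. -/
open MvPolynomial

/-- `R/I` is Cohen–Macaulay: there is a regular sequence on `R/I` contained in the
maximal ideal generated by the variables whose length equals the Krull dimension of `R/I`. -/
def IsCMQuot {K : Type*} [Field K] {σ : Type*} (I : Ideal (MvPolynomial σ K)) : Prop :=
  ∃ rs : List (MvPolynomial σ K),
    (∀ r ∈ rs, r ∈ Ideal.span (Set.range (X : σ → MvPolynomial σ K))) ∧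
    RingTheory.Sequence.IsRegular (MvPolynomial σ K ⧸ I) rs ∧
    (rs.length : WithBot (WithTop ℕ)) = ringKrullDim (MvPolynomial σ K ⧸ I)

/-!
Write `f = a ^ p * x ^ p`, `c = a ^ k * b ^ k` and `h = b ^ q * y ^ q`. The hypothesis says exactly
that `c ^ 2` divides `f * h`, and this forces `(f, c, h) ^ n = (f, c) ^ n + (h, c) ^ n`. In terms of
exponents this description shows that a monomial lies in `I ^ n` as soon as its products with
`a ^ m` and with `x ^ m` do; as `I ^ n` contains some `a ^ r * x ^ s`, the element `x - a` is a
nonzerodivisor modulo `I ^ n`. Substituting `x = a` turns `I` into an ideal of the same shape, with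
first generator a power of `a`, so by symmetry `y - b` is a nonzerodivisor modulo
`(x - a) + I ^ n`. Every prime over `I` contains two variables and `I ⊆ (a, b)`, so `R ⧸ I ^ n` has
dimension two, the length of the regular sequence `x - a, y - b`.
-/

section IdempotentSemiring

open Finset

variable {α : Type*} [IdemCommSemiring α] {a b c : α}

theorem add_pow_eq_sum_antidiagonal (a b : α) (n : ℕ) :
    (a + b) ^ n = ∑ ij ∈ antidiagonal n, a ^ ij.1 * b ^ ij.2 := by
  rw [(Commute.all a b).add_pow']
  refine sum_congr rfl fun ij hij => nsmul_eq_self (Nat.choose_pos ?_).ne' _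
  exact Nat.le.intro (mem_antidiagonal.1 hij)

theorem mul_add_pow_le_of_mul_le_sq (hac : a * c ≤ b ^ 2) (n : ℕ) :
    c * (a + b) ^ n ≤ (a + b) ^ (n + 1) + (c + b) ^ (n + 1) := by
  induction n with
  | zero =>
    calc c * (a + b) ^ 0 = c := by rw [pow_zero, mul_one]
      _ ≤ (c + b) ^ (0 + 1) := by rw [zero_add, pow_one]; exact le_self_add
      _ ≤ (a + b) ^ (0 + 1) + (c + b) ^ (0 + 1) := le_add_self
  | succ n ih =>
    have hb : b ≤ a + b := le_add_self
    have hb' : b ≤ c + b := le_add_self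
    calc c * (a + b) ^ (n + 1)
        = a * c * (a + b) ^ n + b * (c * (a + b) ^ n) := by ring
      _ ≤ b ^ 2 * (a + b) ^ n + b * ((a + b) ^ (n + 1) + (c + b) ^ (n + 1)) := by gcongr
      _ = b ^ 2 * (a + b) ^ n + b * (a + b) ^ (n + 1) + b * (c + b) ^ (n + 1) := by ring
      _ ≤ (a + b) ^ 2 * (a + b) ^ n + (a + b) * (a + b) ^ (n + 1)
            + (c + b) * (c + b) ^ (n + 1) := by gcongr
      _ = (a + b) ^ (n + 2) + (c + b) ^ (n + 2) := by
        rw [← pow_add, ← pow_succ', ← pow_succ', add_comm 2 n, add_idem]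

theorem add_add_pow_eq_of_mul_le_sq (hac : a * c ≤ b ^ 2) (n : ℕ) :
    (a + b + c) ^ n = (a + b) ^ n + (c + b) ^ n := by
  have hab : a + b ≤ a + b + c := le_self_add
  have hcb : c + b ≤ a + b + c := by rw [add_right_comm, add_assoc]; exact le_add_self
  refine le_antisymm ?_ (add_le (pow_le_pow_left' hab n) (pow_le_pow_left' hcb n))
  induction n with
  | zero => simp
  | succ n ih =>
    have hca : c * a ≤ b ^ 2 := mul_comm a c ▸ hac
    calc (a + b + c) ^ (n + 1)
        ≤ ((a + b) ^ n + (c + b) ^ n) * (a + b + c) := by rw [pow_succ]; gcongr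
      _ = ((a + b) ^ (n + 1) + (c + b) ^ (n + 1))
            + (c * (a + b) ^ n + a * (c + b) ^ n) := by ring
      _ ≤ (a + b) ^ (n + 1) + (c + b) ^ (n + 1) := by
        refine add_le le_rfl (add_le (mul_add_pow_le_of_mul_le_sq hac n) ?_)
        rw [add_comm ((a + b) ^ _)]
        exact mul_add_pow_le_of_mul_le_sq hca n

end IdempotentSemiring

section Quotient

variable {R : Type*} [CommRing R]

-- Since `v ^ m * f ≡ u ^ m * f` modulo `L`, both `u ^ (p + q) * f` and `v ^ (p + q) * f` are
-- congruent to `u ^ p * v ^ q * f`.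
theorem mem_of_sub_mul_mem {L : Ideal R} {u v : R} {p q : ℕ} (huv : u ^ p * v ^ q ∈ L)
    (hL : ∀ (f : R) (m : ℕ), u ^ m * f ∈ L → v ^ m * f ∈ L → f ∈ L)
    {f : R} (hf : (v - u) * f ∈ L) : f ∈ L := by
  have hpow (m : ℕ) : (v ^ m - u ^ m) * f ∈ L := by
    obtain ⟨c, hc⟩ := sub_dvd_pow_sub_pow v u m
    rw [hc, mul_right_comm]
    exact L.mul_mem_right _ hf
  have huvf : u ^ p * v ^ q * f ∈ L := L.mul_mem_right _ huv
  refine hL f (p + q) ?_ ?_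
  · convert L.sub_mem huvf (L.mul_mem_left (u ^ p) (hpow q)) using 1
    ring
  · convert L.add_mem huvf (L.mul_mem_left (v ^ q) (hpow p)) using 1
    ring

theorem mk_mem_smul_top_iff {I J : Ideal R} {g : R} :
    Ideal.Quotient.mk I g ∈ (J • ⊤ : Submodule R (R ⧸ I)) ↔ g ∈ J ⊔ I := by
  rw [Ideal.smul_top_eq_map, Submodule.restrictScalars_mem]
  exact Ideal.mem_quotient_iff_mem_sup

theorem isRegular_quotient_iff {I : Ideal R} {rs : List R} :
    RingTheory.Sequence.IsRegular (R ⧸ I) rs ↔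
      (∀ (i : ℕ) (hi : i < rs.length) (g : R),
        rs[i] * g ∈ Ideal.ofList (rs.take i) ⊔ I → g ∈ Ideal.ofList (rs.take i) ⊔ I) ∧
      Ideal.ofList rs ⊔ I ≠ ⊤ := by
  rw [RingTheory.Sequence.isRegular_iff, RingTheory.Sequence.isWeaklyRegular_iff]
  refine and_congr (forall₂_congr fun i hi => ?_) (not_congr ?_)
  · rw [isSMulRegular_quotient_iff_mem_of_smul_mem, Ideal.Quotient.mk_surjective.forall]
    exact forall_congr' fun g => imp_congr mk_mem_smul_top_iff mk_mem_smul_top_iff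
  · rw [eq_comm, Submodule.eq_top_iff', Submodule.eq_top_iff',
      Ideal.Quotient.mk_surjective.forall]
    simp only [mk_mem_smul_top_iff]

theorem mem_sup_iff_map_mem_map {F : Type*} [FunLike F R R] [RingHomClass F R R] {φ : F}
    {D : Ideal R} (hD : D ≤ RingHom.ker φ) (hφ : ∀ r, φ r - r ∈ D) (I : Ideal R)
    (g : R) : g ∈ D ⊔ I ↔ φ g ∈ I.map φ := by
  constructor
  · intro hg
    have hmap := Ideal.mem_map_of_mem φ hg
    rwa [Ideal.map_sup, (Ideal.map_eq_bot_iff_le_ker φ).2 hD, bot_sup_eq] at hmap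
  · intro hg
    have hmap : I.map φ ≤ D ⊔ I := Ideal.map_le_iff_le_comap.2 fun f hf => by
      simpa using add_mem (Ideal.mem_sup_left (hφ f)) (Ideal.mem_sup_right hf : f ∈ D ⊔ I)
    simpa using sub_mem (hmap hg) (Ideal.mem_sup_left (hφ g))

theorem ringKrullDim_quotient_le_of_le {I J : Ideal R} (hIJ : I ≤ J) :
    ringKrullDim (R ⧸ J) ≤ ringKrullDim (R ⧸ I) :=
  ringKrullDim_le_of_surjective _ (Ideal.Quotient.factor_surjective hIJ)

theorem ringKrullDim_quotient_le_of_forall_isPrime {I : Ideal R} {d : WithBot ℕ∞}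
    (h : ∀ P : Ideal R, P.IsPrime → I ≤ P → ringKrullDim (R ⧸ P) ≤ d) :
    ringKrullDim (R ⧸ I) ≤ d := by
  rw [ringKrullDim_quotient]
  refine iSup_le fun chain => ?_
  refine le_trans ?_ (h chain.head.1.asIdeal chain.head.1.2 chain.head.2)
  rw [ringKrullDim_quotient]
  exact Order.LTSeries.length_le_krullDim
    { length := chain.length
      toFun := fun i => ⟨(chain i).1, LTSeries.head_le chain i⟩
      step := fun i => chain.step i }

end Quotient

section MonomialIdeal

open Finset

variable {σ R : Type*}

theorem span_monomial_pair_pow [CommSemiring R] (s t : σ →₀ ℕ) (n : ℕ) :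
    Ideal.span {monomial s (1 : R), monomial t 1} ^ n =
      Ideal.span ((fun e => monomial e (1 : R)) ''
        {e | ∃ i j : ℕ, i + j = n ∧ i • s + j • t = e}) := by
  have hset : (fun e => monomial e (1 : R)) '' {e | ∃ i j : ℕ, i + j = n ∧ i • s + j • t = e} =
      ⋃ ij ∈ antidiagonal n, {monomial (ij.1 • s + ij.2 • t) 1} := by
    ext
    simp [eq_comm]
  rw [hset, Ideal.span_insert, ← Ideal.add_eq_sup, add_pow_eq_sum_antidiagonal, Ideal.sum_eq_sup,
    Finset.sup_eq_iSup]
  refine (iSup_congr fun ij => iSup_congr fun _ => ?_).trans (Submodule.span_iUnion₂ _).symm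
  rw [Ideal.span_singleton_pow, Ideal.span_singleton_pow,
    Ideal.span_singleton_mul_span_singleton, monomial_pow, monomial_pow, monomial_mul]
  simp

theorem mem_span_monomial_triple_pow_iff [CommSemiring R] {s t u : σ →₀ ℕ}
    (htsu : 2 • t ≤ s + u) {n : ℕ} {f : MvPolynomial σ R} :
    f ∈ Ideal.span {monomial s (1 : R), monomial t 1, monomial u 1} ^ n ↔
      ∀ e ∈ f.support, (∃ i j : ℕ, i + j = n ∧ i • s + j • t ≤ e) ∨
        (∃ i j : ℕ, i + j = n ∧ i • u + j • t ≤ e) := by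
  have hsq : Ideal.span {monomial s (1 : R)} * Ideal.span {monomial u 1} ≤
      Ideal.span {monomial t 1} ^ 2 := by
    rw [Ideal.span_singleton_mul_span_singleton, Ideal.span_singleton_pow,
      Ideal.span_singleton_le_span_singleton, monomial_mul, monomial_pow, monomial_dvd_monomial]
    simp [htsu]
  have hspan : Ideal.span {monomial s (1 : R), monomial t 1, monomial u 1} ^ n =
      Ideal.span {monomial s (1 : R), monomial t 1} ^ n ⊔
        Ideal.span {monomial u (1 : R), monomial t 1} ^ n := by
    simp only [Ideal.span_insert, ← sup_assoc]
    exact add_add_pow_eq_of_mul_le_sq hsq n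
  rw [hspan, span_monomial_pair_pow, span_monomial_pair_pow, ← Ideal.span_union,
    ← Set.image_union, mem_ideal_span_monomial_image]
  refine forall₂_congr fun e _ => ?_
  simp [or_and_right, exists_or]

theorem single_add_mem_support_X_pow_mul [CommSemiring R] {f : MvPolynomial σ R} {e : σ →₀ ℕ}
    (he : e ∈ f.support) (i : σ) (m : ℕ) : Finsupp.single i m + e ∈ (X i ^ m * f).support := by
  rw [mem_support_iff, X_pow_eq_monomial, coeff_monomial_mul, one_mul]
  exact mem_support_iff.1 he

theorem mem_of_X_sub_X_mul_mem [CommRing R] {L : Ideal (MvPolynomial σ R)}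
    {P : (σ →₀ ℕ) → Prop} (hL : ∀ f, f ∈ L ↔ ∀ e ∈ f.support, P e) {u v : σ} {p q : ℕ}
    (huv : X u ^ p * X v ^ q ∈ L)
    (hP : ∀ e m, P (Finsupp.single u m + e) → P (Finsupp.single v m + e) → P e)
    {f : MvPolynomial σ R} (hf : (X v - X u) * f ∈ L) : f ∈ L := by
  refine mem_of_sub_mul_mem huv (fun f m hu hv => (hL f).2 fun e he => ?_) hf
  exact hP e m ((hL _).1 hu _ (single_add_mem_support_X_pow_mul he u m))
    ((hL _).1 hv _ (single_add_mem_support_X_pow_mul he v m))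

end MonomialIdeal

section Variables

variable {σ R : Type*}

/-- The substitution `X v ↦ X u`, which presents the quotient by `X v - X u` as a retract. -/
noncomputable def identifyVar [CommSemiring R] [DecidableEq σ] (u v : σ) :
    MvPolynomial σ R →ₐ[R] MvPolynomial σ R :=
  aeval (Function.update X v (X u))

theorem mem_span_X_sub_X_sup_iff [CommRing R] [DecidableEq σ] (u v : σ)
    (I : Ideal (MvPolynomial σ R)) (g : MvPolynomial σ R) :
    g ∈ Ideal.span {X v - X u} ⊔ I ↔ identifyVar u v g ∈ I.map (identifyVar u v) := by
  refine mem_sup_iff_map_mem_map ?_ (fun r => ?_) I g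
  · rw [Ideal.span_singleton_le_iff_mem, RingHom.mem_ker]
    by_cases huv : u = v <;> simp [identifyVar, huv]
  · have hX : Ideal.Quotient.mk (Ideal.span {X v - X u}) (X u : MvPolynomial σ R) =
        Ideal.Quotient.mk (Ideal.span {X v - X u}) (X v) :=
      (Ideal.Quotient.eq.2 (Ideal.mem_span_singleton_self _)).symm
    have hmk : (Ideal.Quotient.mkₐ R (Ideal.span {X v - X u})).comp (identifyVar u v) =
        Ideal.Quotient.mkₐ R (Ideal.span {X v - X u}) := by
      ext s
      by_cases hs : s = v
      · simp [identifyVar, hs, hX]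
      · simp [identifyVar, hs]
    exact Ideal.Quotient.eq.1 (DFunLike.congr_fun hmk r)

theorem ker_killCompl_val_compl [CommSemiring R] (s : Set σ) :
    RingHom.ker (killCompl (R := R) (Subtype.val_injective (p := (· ∈ sᶜ)))) =
      Ideal.span (X '' s) := by
  ext f
  rw [mem_ideal_span_X_image, RingHom.mem_ker, ← support_eq_empty, support_killCompl,
    Finset.eq_empty_iff_forall_notMem]
  simp only [Finset.mem_preimage]
  constructor
  · intro hf m hm
    by_contra! hs
    refine hf (m.comapDomain _ Subtype.val_injective.injOn) ?_
    have hrange : (m.support : Set σ) ⊆ Set.range ((↑) : ↥sᶜ → σ) := fun i hi => by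
      simpa using fun his => Finsupp.mem_support_iff.1 hi (hs i his)
    rwa [Finsupp.mapDomain_comapDomain _ Subtype.val_injective _ hrange]
  · intro hf m hm
    obtain ⟨i, his, hi⟩ := hf _ hm
    exact hi (Finsupp.mapDomain_of_notMem_range _ _ (by simpa using his))

theorem ringKrullDim_quotient_span_X_image [Field R] [Finite σ] (s : Set σ) :
    ringKrullDim (MvPolynomial σ R ⧸ Ideal.span (X '' s : Set (MvPolynomial σ R))) = sᶜ.ncard := by
  have hsurj : Function.Surjective (killCompl (R := R) (Subtype.val_injective (p := (· ∈ sᶜ)))) :=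
    fun f => ⟨_, killCompl_rename_app _ f⟩
  rw [← ker_killCompl_val_compl s,
    ringKrullDim_eq_of_ringEquiv (Ideal.quotientKerAlgEquivOfSurjective hsurj).toRingEquiv,
    MvPolynomial.ringKrullDim_of_isNoetherianRing, ringKrullDim_eq_zero_of_field, zero_add]
  rfl

theorem X_sub_X_mem_idealOfVars [CommRing R] (i j : σ) :
    (X i - X j : MvPolynomial σ R) ∈ idealOfVars σ R :=
  sub_mem (Ideal.subset_span ⟨i, rfl⟩) (Ideal.subset_span ⟨j, rfl⟩)

theorem idealOfVars_ne_top [CommSemiring R] [Nontrivial R] : idealOfVars σ R ≠ ⊤ := by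
  rw [Ideal.ne_top_iff_one, ← pow_one (idealOfVars σ R), ← C_1, C_mem_pow_idealOfVars_iff]
  simp

end Variables

section PathIdeal

/-- The ideal `(a ^ α * x ^ ξ, a ^ k * b ^ l, b ^ β * y ^ η)` of `R[a, b, x, y]`, with the variables
`a, b, x, y` encoded as `X 0, X 1, X 2, X 3`. The two exponents of a generator may differ, so that
the family is stable under the substitution `x ↦ a`. -/
noncomputable def pathIdeal (R : Type*) [CommSemiring R] (α ξ k l β η : ℕ) :
    Ideal (MvPolynomial (Fin 4) R) :=
  Ideal.span {X 0 ^ α * X 2 ^ ξ, X 0 ^ k * X 1 ^ l, X 1 ^ β * X 3 ^ η}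

variable {α ξ k l β η n : ℕ}

section Generators

variable {R : Type*} [CommSemiring R]

theorem X_zero_pow_mul_X_two_pow_mem_pathIdeal : X 0 ^ α * X 2 ^ ξ ∈ pathIdeal R α ξ k l β η :=
  Ideal.subset_span (Or.inl rfl)

theorem X_zero_pow_mul_X_one_pow_mem_pathIdeal : X 0 ^ k * X 1 ^ l ∈ pathIdeal R α ξ k l β η :=
  Ideal.subset_span (Or.inr (Or.inl rfl))

theorem X_one_pow_mul_X_three_pow_mem_pathIdeal : X 1 ^ β * X 3 ^ η ∈ pathIdeal R α ξ k l β η :=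
  Ideal.subset_span (Or.inr (Or.inr rfl))

end Generators

/-- The monomial `a ^ r * b ^ s * x ^ t` is divisible by a generator of
`(a ^ α * x ^ ξ, a ^ k * b ^ l) ^ n`. -/
def EdgePairPowDvd (α ξ k l n r s t : ℕ) : Prop :=
  ∃ i j : ℕ, i + j = n ∧ i * α + j * k ≤ r ∧ j * l ≤ s ∧ i * ξ ≤ t

theorem mul_le_of_edgePairPowDvd {r s t : ℕ} (hα : k ≤ α) (h : EdgePairPowDvd α ξ k l n r s t) :
    n * k ≤ r := by
  obtain ⟨i, j, rfl, hr, -, -⟩ := h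
  calc (i + j) * k = i * k + j * k := add_mul i j k
    _ ≤ i * α + j * k := by gcongr
    _ ≤ r := hr

theorem edgePairPowDvd_of_mul_le {r s t : ℕ} (hr : n * k ≤ r) (hs : n * l ≤ s) :
    EdgePairPowDvd α ξ k l n r s t :=
  ⟨0, n, zero_add n, by simpa using hr, hs, by simp⟩

theorem edgePairPowDvd_of_add_of_add {r s t m : ℕ} (hα : k ≤ α)
    (ha : EdgePairPowDvd α ξ k l n (m + r) s t) (hx : EdgePairPowDvd α ξ k l n r s (m + t)) :
    EdgePairPowDvd α ξ k l n r s t := by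
  obtain ⟨i, j, hij, -, hs, ht⟩ := ha
  obtain ⟨i', j', hij', hr', hs', -⟩ := hx
  rcases le_total i' i with hi | hi
  · exact ⟨i', j', hij', hr', hs', (Nat.mul_le_mul_right ξ hi).trans ht⟩
  · obtain ⟨d, rfl⟩ := Nat.exists_eq_add_of_le hi
    obtain rfl : j = j' + d := by lia
    refine ⟨i, j' + d, hij, ?_, hs, ht⟩
    calc i * α + (j' + d) * k = i * α + d * k + j' * k := by ring
      _ ≤ i * α + d * α + j' * k := by gcongr
      _ = (i + d) * α + j' * k := by ring
      _ ≤ r := hr'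

theorem edgePairPowDvd_or_of_add_of_add {r s t w m : ℕ} (hα : k ≤ α) (hβ : l ≤ β)
    (ha : EdgePairPowDvd α ξ k l n (m + r) s t ∨ EdgePairPowDvd β η l k n s (m + r) w)
    (hx : EdgePairPowDvd α ξ k l n r s (m + t) ∨ EdgePairPowDvd β η l k n s r w) :
    EdgePairPowDvd α ξ k l n r s t ∨ EdgePairPowDvd β η l k n s r w := by
  rcases hx with hx | hx
  · left
    rcases ha with ha | ha
    · exact edgePairPowDvd_of_add_of_add hα ha hx
    · exact edgePairPowDvd_of_mul_le (mul_le_of_edgePairPowDvd hα hx)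
        (mul_le_of_edgePairPowDvd hβ ha)
  · exact Or.inr hx

theorem mem_pathIdeal_pow_iff {R : Type*} [CommSemiring R] (hα : 2 * k ≤ α) (hβ : 2 * l ≤ β)
    (f : MvPolynomial (Fin 4) R) :
    f ∈ pathIdeal R α ξ k l β η ^ n ↔ ∀ e ∈ f.support,
      EdgePairPowDvd α ξ k l n (e 0) (e 1) (e 2) ∨
        EdgePairPowDvd β η l k n (e 1) (e 0) (e 3) := by
  simp only [pathIdeal, X_pow_eq_monomial, monomial_mul, mul_one]
  rw [mem_span_monomial_triple_pow_iff]
  · refine forall₂_congr fun e _ => ?_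
    simp [EdgePairPowDvd, Finsupp.le_def, Fin.forall_fin_succ, Finsupp.single_apply,
      and_left_comm]
  · simp [Finsupp.le_def, Fin.forall_fin_succ, Finsupp.single_apply, hα, hβ]

section CommRing

variable {R : Type*} [CommRing R]

theorem mem_pathIdeal_pow_of_X_two_sub_X_zero_mul_mem (hα : 2 * k ≤ α) (hβ : 2 * l ≤ β)
    {f : MvPolynomial (Fin 4) R} (hf : (X 2 - X 0) * f ∈ pathIdeal R α ξ k l β η ^ n) :
    f ∈ pathIdeal R α ξ k l β η ^ n := by
  have hpow : X 0 ^ (α * n) * X 2 ^ (ξ * n) ∈ pathIdeal R α ξ k l β η ^ n := by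
    rw [pow_mul, pow_mul, ← mul_pow]
    exact Ideal.pow_mem_pow X_zero_pow_mul_X_two_pow_mem_pathIdeal n
  refine mem_of_X_sub_X_mul_mem (mem_pathIdeal_pow_iff hα hβ) hpow (fun e m ha hx => ?_) hf
  refine edgePairPowDvd_or_of_add_of_add (m := m) (by lia) (by lia) ?_ ?_
  · simpa using ha
  · simpa using hx

theorem mem_pathIdeal_pow_of_X_three_sub_X_one_mul_mem (hα : 2 * k ≤ α) (hβ : 2 * l ≤ β)
    {f : MvPolynomial (Fin 4) R} (hf : (X 3 - X 1) * f ∈ pathIdeal R α ξ k l β η ^ n) :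
    f ∈ pathIdeal R α ξ k l β η ^ n := by
  have hpow : X 1 ^ (β * n) * X 3 ^ (η * n) ∈ pathIdeal R α ξ k l β η ^ n := by
    rw [pow_mul, pow_mul, ← mul_pow]
    exact Ideal.pow_mem_pow X_one_pow_mul_X_three_pow_mem_pathIdeal n
  refine mem_of_X_sub_X_mul_mem (mem_pathIdeal_pow_iff hα hβ) hpow (fun e m hb hy => ?_) hf
  refine (edgePairPowDvd_or_of_add_of_add (m := m) (by lia) (by lia) ?_ ?_).symm
  · simpa using hb.symm
  · simpa using hy.symm

theorem map_identifyVar_pathIdeal :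
    (pathIdeal R α ξ k l β η).map (identifyVar 0 2) = pathIdeal R (α + ξ) 0 k l β η := by
  rw [pathIdeal, Ideal.map_span, pathIdeal]
  simp [Set.image_insert_eq, identifyVar, Function.update_of_ne, pow_add]

end CommRing

theorem pathIdeal_le_span_X_image {R : Type*} [CommSemiring R] (hα : 0 < α) (hk : 0 < k)
    (hβ : 0 < β) : pathIdeal R α ξ k l β η ≤ Ideal.span (X '' {0, 1}) := by
  have hmem {i : Fin 4} {m : ℕ} (hi : i ∈ ({0, 1} : Set (Fin 4))) (hm : 0 < m)
      (g : MvPolynomial (Fin 4) R) : X i ^ m * g ∈ Ideal.span (X '' {0, 1}) :=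
    Ideal.mul_mem_right _ _
      (Ideal.pow_mem_of_mem _ (Ideal.subset_span (Set.mem_image_of_mem X hi)) _ hm)
  refine Ideal.span_le.2 ?_
  rintro _ (rfl | rfl | rfl)
  exacts [hmem (Or.inl rfl) hα _, hmem (Or.inl rfl) hk _, hmem (Or.inr rfl) hβ _]

theorem exists_ne_X_mem_of_pathIdeal_le {R : Type*} [CommSemiring R]
    {P : Ideal (MvPolynomial (Fin 4) R)} (hP : P.IsPrime) (hle : pathIdeal R α ξ k l β η ≤ P) :
    ∃ i j : Fin 4, i ≠ j ∧ X i ∈ P ∧ X j ∈ P := by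
  have hedge {i j : Fin 4} {r s : ℕ} (h : X i ^ r * X j ^ s ∈ P) : X i ∈ P ∨ X j ∈ P :=
    (hP.mem_or_mem h).imp (hP.mem_of_pow_mem r) (hP.mem_of_pow_mem s)
  have hax : X 0 ∈ P ∨ X 2 ∈ P := hedge (hle X_zero_pow_mul_X_two_pow_mem_pathIdeal)
  have hab : X 0 ∈ P ∨ X 1 ∈ P := hedge (hle X_zero_pow_mul_X_one_pow_mem_pathIdeal)
  have hby : X 1 ∈ P ∨ X 3 ∈ P := hedge (hle X_one_pow_mul_X_three_pow_mem_pathIdeal)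
  rcases hab with ha | hb
  · exact hby.elim (fun hb => ⟨0, 1, by decide, ha, hb⟩) fun hy => ⟨0, 3, by decide, ha, hy⟩
  · exact hax.elim (fun ha => ⟨0, 1, by decide, ha, hb⟩) fun hx => ⟨2, 1, by decide, hx, hb⟩

theorem ringKrullDim_quotient_pathIdeal_pow {K : Type*} [Field K] (hα : 0 < α) (hk : 0 < k)
    (hβ : 0 < β) (hn : n ≠ 0) :
    ringKrullDim (MvPolynomial (Fin 4) K ⧸ pathIdeal K α ξ k l β η ^ n) = 2 := by
  have hdim {i j : Fin 4} (hij : i ≠ j) :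
      ringKrullDim (MvPolynomial (Fin 4) K ⧸ Ideal.span
        (X '' {i, j} : Set (MvPolynomial (Fin 4) K))) = 2 := by
    rw [ringKrullDim_quotient_span_X_image, Set.ncard_compl, Set.ncard_pair hij, Nat.card_fin]
    rfl
  apply le_antisymm
  · refine ringKrullDim_quotient_le_of_forall_isPrime fun P hP hIP => ?_
    obtain ⟨i, j, hij, hi, hj⟩ := exists_ne_X_mem_of_pathIdeal_le hP (hP.le_of_pow_le hIP)
    rw [← hdim hij]
    refine ringKrullDim_quotient_le_of_le (Ideal.span_le.2 ?_)
    rintro _ ⟨s, rfl | rfl, rfl⟩ <;> assumption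
  · rw [← hdim (zero_ne_one (α := Fin 4))]
    exact ringKrullDim_quotient_le_of_le
      ((Ideal.pow_le_self hn).trans (pathIdeal_le_span_X_image hα hk hβ))

theorem mem_idealOfVars_of_mem_X_sub_X_list {R : Type*} [CommRing R] {r : MvPolynomial (Fin 4) R}
    (hr : r ∈ [X 2 - X 0, X 3 - X 1]) : r ∈ idealOfVars (Fin 4) R := by
  simp only [List.mem_cons, List.not_mem_nil, or_false] at hr
  rcases hr with rfl | rfl <;> exact X_sub_X_mem_idealOfVars _ _

theorem isRegular_quotient_pathIdeal_pow {R : Type*} [CommRing R] [Nontrivial R] (hk : 0 < k)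
    (hl : 0 < l) (hα : 2 * k ≤ α) (hβ : 2 * l ≤ β) (hn : n ≠ 0) :
    RingTheory.Sequence.IsRegular (MvPolynomial (Fin 4) R ⧸ pathIdeal R α ξ k l β η ^ n)
      ([X 2 - X 0, X 3 - X 1] : List (MvPolynomial (Fin 4) R)) := by
  refine isRegular_quotient_iff.2 ⟨fun i hi g hg => ?_, ?_⟩
  · replace hi : i < 2 := hi
    interval_cases i
    · simp only [List.take_zero, Ideal.ofList_nil, bot_sup_eq] at hg ⊢
      exact mem_pathIdeal_pow_of_X_two_sub_X_zero_mul_mem hα hβ hg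
    · simp only [List.take_succ_cons, List.take_zero, Ideal.ofList_singleton] at hg ⊢
      rw [mem_span_X_sub_X_sup_iff, Ideal.map_pow, map_identifyVar_pathIdeal] at hg ⊢
      refine mem_pathIdeal_pow_of_X_three_sub_X_one_mul_mem (by lia) hβ ?_
      simpa [identifyVar] using hg
  · refine ne_top_of_le_ne_top (idealOfVars_ne_top (σ := Fin 4) (R := R)) (sup_le ?_ ?_)
    · exact Ideal.span_le.2 fun _ => mem_idealOfVars_of_mem_X_sub_X_list
    · calc pathIdeal R α ξ k l β η ^ n ≤ pathIdeal R α ξ k l β η := Ideal.pow_le_self hn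
        _ ≤ Ideal.span (X '' {0, 1}) := pathIdeal_le_span_X_image (by lia) hk (by lia)
        _ ≤ idealOfVars (Fin 4) R := Ideal.span_mono (Set.image_subset_range _ _)

end PathIdeal

theorem cm_all_powers_path_general {K : Type*} [Field K] {α ξ k l β η n : ℕ} (hk : 0 < k)
    (hl : 0 < l) (hα : 2 * k ≤ α) (hβ : 2 * l ≤ β) (hn : n ≠ 0) :
    IsCMQuot (pathIdeal K α ξ k l β η ^ n) := by
  refine ⟨[X 2 - X 0, X 3 - X 1], fun _ => mem_idealOfVars_of_mem_X_sub_X_list,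
    isRegular_quotient_pathIdeal_pow hk hl hα hβ hn, ?_⟩
  rw [ringKrullDim_quotient_pathIdeal_pow (by lia) hk (by lia) hn]
  rfl

/-- For the weighted edge ideal `I = (a^p x^p, a^k b^k, b^q y^q)` of the path `x–a–b–y`
in `R = K[a,b,x,y]`: if `min{p,q} ≥ 2k` then `R/I^n` is Cohen–Macaulay for all `n ≥ 1`.
Here `a = X 0`, `b = X 1`, `x = X 2`, `y = X 3`. -/
theorem cm_all_powers_path {K : Type*} [Field K] (p q k : ℕ)
    (hp : 0 < p) (hq : 0 < q) (hk : 0 < k) (h : 2 * k ≤ min p q) :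
    ∀ n : ℕ, 1 ≤ n →
      IsCMQuot ((Ideal.span ({(X 0) ^ p * (X 2) ^ p, (X 0) ^ k * (X 1) ^ k,
        (X 1) ^ q * (X 3) ^ q} : Set (MvPolynomial (Fin 4) K))) ^ n) := fun _ hn =>
  cm_all_powers_path_general hk hk (h.trans (min_le_left p q)) (h.trans (min_le_right p q))
    (Nat.one_le_iff_ne_zero.1 hn)
end
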